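/- Fix integers n ≥ 1 and k with 1 ≤ k ≤ n, let x̃ ∈ ℝⁿ be k-sparse nonnegative with x̃ ≠ 0, let σ > 0, C_w > 0, g ∈ ℝᵐ with ‖g‖₂ > 0, and h ∈ ℝⁿ. Suppose ν̂ ≥ 0 and λ̂ ∈ ℝⁿ with 0 ≤ λ̂_i ≤ 2ν̂ for all i attain the supremum defining ξ_ov(σ, g, h, x̃), and suppose √(1 + σ²/C_w²)·‖h + ν̂·1 − λ̂‖₂ ≤ ‖g‖₂. Write Ĥ = ‖h + ν̂·1 − λ̂‖₂. Then ξ(σ, g, h, x̃) = σ·√(‖g‖₂² − Ĥ²) − Σ_{i=n−k+1}^{n} λ̂_i·x̃_i, the minimum defining ξ(σ, g, h, x̃) is attained at ŵ = −σ·(h + ν̂·1 − λ̂)/√(‖g‖₂² − Ĥ²), and ‖ŵ‖₂ = σ·Ĥ/√(‖g‖₂² − Ĥ²) ≤ C_w. -/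

import Mathlib

noncomputable def e2norm {d : ℕ} (x : Fin d → ℝ) : ℝ := Real.sqrt (∑ i, x i ^ 2)

noncomputable def l1norm {d : ℕ} (x : Fin d → ℝ) : ℝ := ∑ i, |x i|

def kSparseNonneg (n k : ℕ) (x : Fin n → ℝ) : Prop :=
  (∀ i : Fin n, (i : ℕ) < n - k → x i = 0) ∧ ∀ i, 0 ≤ x i

noncomputable def tailSum {n : ℕ} (k : ℕ) (lam x : Fin n → ℝ) : ℝ :=
  ∑ i ∈ Finset.univ.filter (fun i : Fin n => n - k ≤ (i : ℕ)), lam i * x i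

/-- The constraint set of the "overwhelming" dual optimization (2.37). -/
def xiOvSet (m n k : ℕ) (σ : ℝ) (xt : Fin n → ℝ) (g : Fin m → ℝ) (h : Fin n → ℝ) :
    Set ℝ :=
  {z : ℝ | ∃ ν : ℝ, ∃ lam : Fin n → ℝ, 0 ≤ ν ∧
    (∀ i, 0 ≤ lam i ∧ lam i ≤ 2 * ν) ∧
    e2norm (fun i => h i + ν - lam i) ≤ e2norm g ∧
    z = σ * Real.sqrt (e2norm g ^ 2 - e2norm (fun i => h i + ν - lam i) ^ 2)
        - tailSum k lam xt}

theorem aux_deriv (σ R b c p : ℝ) (hσ : 0 < σ) (hR : 0 < R)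
    (H : ∀ t : ℝ, 0 ≤ t → t ≤ 1 → 0 ≤ R ^ 2 - 2 * t * b - t ^ 2 * c →
      σ * Real.sqrt (R ^ 2 - 2 * t * b - t ^ 2 * c) ≤ σ * R + t * p) :
    - (σ * b) ≤ R * p := by
  have key : ∀ᶠ t : ℝ in nhdsWithin 0 (Set.Ioi 0),
      σ ^ 2 * (-2 * b - t * c) ≤ 2 * σ * R * p + t * p ^ 2 := by
    have h1 : ∀ᶠ t : ℝ in nhdsWithin 0 (Set.Ioi 0), t < 1 :=
      nhdsWithin_le_nhds (Iio_mem_nhds (by norm_num))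
    have h2 : ∀ᶠ t : ℝ in nhdsWithin 0 (Set.Ioi 0), 0 < R ^ 2 - 2 * t * b - t ^ 2 * c := by
      apply nhdsWithin_le_nhds
      have hc : Continuous fun t : ℝ => R ^ 2 - 2 * t * b - t ^ 2 * c := by fun_prop
      have := hc.tendsto 0
      apply this.eventually (lt_mem_nhds _)
      simp; positivity
    filter_upwards [h1, h2, self_mem_nhdsWithin] with t ht1 ht2 ht0
    have ht0' : 0 < t := ht0
    have h3 := H t ht0'.le ht1.le ht2.le
    have hs := Real.sqrt_nonneg (R ^ 2 - 2 * t * b - t ^ 2 * c)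
    have hq := Real.sq_sqrt ht2.le
    have h4 := pow_le_pow_left₀ (mul_nonneg hσ.le hs) h3 2
    rw [mul_pow, hq] at h4
    have : t * (σ ^ 2 * (-2 * b - t * c)) ≤ t * (2 * σ * R * p + t * p ^ 2) := by
      nlinarith
    exact le_of_mul_le_mul_left this ht0'
  have hl : Filter.Tendsto (fun t : ℝ => σ ^ 2 * (-2 * b - t * c)) (nhdsWithin 0 (Set.Ioi 0))
      (nhds (σ ^ 2 * (-2 * b - 0 * c))) :=
    ((by fun_prop : Continuous fun t : ℝ => σ ^ 2 * (-2 * b - t * c)).tendsto 0).mono_left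
      nhdsWithin_le_nhds
  have hr : Filter.Tendsto (fun t : ℝ => 2 * σ * R * p + t * p ^ 2) (nhdsWithin 0 (Set.Ioi 0))
      (nhds (2 * σ * R * p + 0 * p ^ 2)) :=
    ((by fun_prop : Continuous fun t : ℝ => 2 * σ * R * p + t * p ^ 2).tendsto 0).mono_left
      nhdsWithin_le_nhds
  have h5 := le_of_tendsto_of_tendsto hl hr key
  have : σ * (-(σ * b)) ≤ σ * (R * p) := by nlinarith
  exact le_of_mul_le_mul_left this hσ

theorem aux_sq {a b : ℝ} (h : a ^ 2 ≤ b ^ 2) (hb : 0 ≤ b) : a ≤ b :=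
  abs_le_of_sq_le_sq' h hb |>.2

theorem aux_e2sq {d : ℕ} (x : Fin d → ℝ) : e2norm x ^ 2 = ∑ i, x i ^ 2 :=
  Real.sq_sqrt (Finset.sum_nonneg fun i _ => sq_nonneg _)

theorem aux_e2nn {d : ℕ} (x : Fin d → ℝ) : 0 ≤ e2norm x := Real.sqrt_nonneg _

theorem aux_tail {n k : ℕ} (xt : Fin n → ℝ) (hxt : kSparseNonneg n k xt) (l : Fin n → ℝ) :
    tailSum k l xt = ∑ i, l i * xt i := by
  unfold tailSum
  apply Finset.sum_subset (Finset.subset_univ _)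
  intro i _ hi
  simp only [Finset.mem_filter, Finset.mem_univ, true_and, not_le] at hi
  rw [hxt.1 i hi, mul_zero]

theorem aux_weak {n : ℕ} (xt h l w : Fin n → ℝ) (ν σ G R : ℝ) (hx : ∀ i, 0 ≤ xt i)
    (hν : 0 ≤ ν) (hl : ∀ i, 0 ≤ l i ∧ l i ≤ 2 * ν) (hσ : 0 < σ) (hG : 0 ≤ G) (hR : 0 ≤ R)
    (hGR : R ^ 2 + e2norm (fun i => h i + ν - l i) ^ 2 = G ^ 2)
    (hw : l1norm (xt + w) ≤ l1norm xt) :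
    σ * R - ∑ i, l i * xt i ≤ Real.sqrt (e2norm w ^ 2 + σ ^ 2) * G + ∑ i, h i * w i := by
  set v : Fin n → ℝ := fun i => h i + ν - l i with hv
  have e1 : ∑ i, h i * w i = ∑ i, v i * w i - ν * ∑ i, w i + ∑ i, l i * w i := by
    rw [Finset.mul_sum, ← Finset.sum_sub_distrib, ← Finset.sum_add_distrib]
    apply Finset.sum_congr rfl; intro i _; simp only [hv]; ring
  have cs : -(e2norm v * e2norm w) ≤ ∑ i, v i * w i := by
    have := Finset.sum_mul_sq_le_sq_mul_sq Finset.univ v w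
    rw [← aux_e2sq, ← aux_e2sq, ← mul_pow] at this
    exact (abs_le.1 (abs_le_of_sq_le_sq this (mul_nonneg (aux_e2nn _) (aux_e2nn _)))).1
  have e2 : σ * R + e2norm w * e2norm v ≤ Real.sqrt (e2norm w ^ 2 + σ ^ 2) * G := by
    have hS := Real.sq_sqrt (by positivity : 0 ≤ e2norm w ^ 2 + σ ^ 2)
    apply aux_sq _ (mul_nonneg (Real.sqrt_nonneg _) hG)
    rw [mul_pow, hS, ← hGR]
    nlinarith [sq_nonneg (e2norm w * R - σ * e2norm v)]
  have e3 : 0 ≤ ∑ i, l i * xt i - ν * ∑ i, w i + ∑ i, l i * w i := by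
    have h1 : ν * l1norm (xt + w) ≤ ν * l1norm xt := mul_le_mul_of_nonneg_left hw hν
    have h2 : ν * l1norm xt - ν * l1norm (xt + w) ≤
        ∑ i, l i * xt i - ν * ∑ i, w i + ∑ i, l i * w i := by
      unfold l1norm
      rw [Finset.mul_sum, Finset.mul_sum, Finset.mul_sum, ← Finset.sum_sub_distrib,
        ← Finset.sum_sub_distrib, ← Finset.sum_add_distrib]
      apply Finset.sum_le_sum
      intro i _
      rw [abs_of_nonneg (hx i), Pi.add_apply]
      obtain ⟨a, b⟩ := hl i
      rcases abs_cases (xt i + w i) with ⟨h, h'⟩ | ⟨h, h'⟩ <;> rw [h] <;> nlinarith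
    linarith
  linarith

theorem lasso_stmt4 (m n k : ℕ) (hn : 1 ≤ n) (hk1 : 1 ≤ k) (hkn : k ≤ n)
    (xt : Fin n → ℝ) (hxt : kSparseNonneg n k xt) (hxt0 : xt ≠ 0)
    (σ Cw : ℝ) (hσ : 0 < σ) (hCw : 0 < Cw)
    (g : Fin m → ℝ) (hg : 0 < e2norm g) (h : Fin n → ℝ)
    (νh : ℝ) (lamh : Fin n → ℝ)
    (hνh : 0 ≤ νh) (hlamh : ∀ i, 0 ≤ lamh i ∧ lamh i ≤ 2 * νh)
    (hmax : IsGreatest (xiOvSet m n k σ xt g h)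
      (σ * Real.sqrt (e2norm g ^ 2 - e2norm (fun i => h i + νh - lamh i) ^ 2)
        - tailSum k lamh xt))
    (hcond : Real.sqrt (1 + σ ^ 2 / Cw ^ 2) * e2norm (fun i => h i + νh - lamh i)
      ≤ e2norm g) :
    (sInf ((fun w : Fin n → ℝ =>
        Real.sqrt (e2norm w ^ 2 + σ ^ 2) * e2norm g + ∑ i, h i * w i) ''
      {w : Fin n → ℝ | e2norm w ≤ Cw ∧ l1norm (xt + w) ≤ l1norm xt})
      = σ * Real.sqrt (e2norm g ^ 2 - e2norm (fun i => h i + νh - lamh i) ^ 2)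
        - tailSum k lamh xt) ∧
    (e2norm (fun i => -(σ * (h i + νh - lamh i)) /
        Real.sqrt (e2norm g ^ 2 - e2norm (fun i => h i + νh - lamh i) ^ 2)) ≤ Cw ∧
      l1norm (xt + fun i => -(σ * (h i + νh - lamh i)) /
        Real.sqrt (e2norm g ^ 2 - e2norm (fun i => h i + νh - lamh i) ^ 2))
        ≤ l1norm xt) ∧
    (Real.sqrt (e2norm (fun i => -(σ * (h i + νh - lamh i)) /
          Real.sqrt (e2norm g ^ 2 - e2norm (fun i => h i + νh - lamh i) ^ 2)) ^ 2
          + σ ^ 2) * e2norm g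
      + ∑ i, h i * (-(σ * (h i + νh - lamh i)) /
          Real.sqrt (e2norm g ^ 2 - e2norm (fun i => h i + νh - lamh i) ^ 2))
      = σ * Real.sqrt (e2norm g ^ 2 - e2norm (fun i => h i + νh - lamh i) ^ 2)
        - tailSum k lamh xt) ∧
    (e2norm (fun i => -(σ * (h i + νh - lamh i)) /
        Real.sqrt (e2norm g ^ 2 - e2norm (fun i => h i + νh - lamh i) ^ 2))
      = σ * e2norm (fun i => h i + νh - lamh i) /
        Real.sqrt (e2norm g ^ 2 - e2norm (fun i => h i + νh - lamh i) ^ 2)) := by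
  have hx := hxt.2
  have hub := hmax.2
  simp only [aux_tail xt hxt] at hub ⊢
  set v : Fin n → ℝ := fun i => h i + νh - lamh i with hv
  set G := e2norm g with hG
  set H := e2norm v with hH
  set R := Real.sqrt (G ^ 2 - H ^ 2) with hRdef
  have hH0 : 0 ≤ H := aux_e2nn _
  have hc2 : (1 + σ ^ 2 / Cw ^ 2) * H ^ 2 ≤ G ^ 2 := by
    have := pow_le_pow_left₀ (mul_nonneg (Real.sqrt_nonneg _) hH0) hcond 2
    rwa [mul_pow, Real.sq_sqrt (by positivity)] at this
  have hpos : 0 < G ^ 2 - H ^ 2 := by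
    have hq : 0 < σ ^ 2 / Cw ^ 2 := by positivity
    rcases hH0.eq_or_lt with h0 | h0
    · rw [← h0]; simp only [ne_eq, OfNat.ofNat_ne_zero, not_false_eq_true, zero_pow, sub_zero]
      positivity
    · have : 0 < σ ^ 2 / Cw ^ 2 * H ^ 2 := by positivity
      linarith
  have hR : 0 < R := Real.sqrt_pos.2 hpos
  have hR2 : R ^ 2 = G ^ 2 - H ^ 2 := Real.sq_sqrt hpos.le
  set w : Fin n → ℝ := fun i => -(σ * (h i + νh - lamh i)) / R with hw
  have hwv : ∀ i, w i = -(σ * v i) / R := fun i => rfl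
  have hHs : H ^ 2 = ∑ i, v i ^ 2 := aux_e2sq v
  -- first order condition
  have foc : ∀ (a : ℝ) (μ : Fin n → ℝ), (∀ t : ℝ, 0 ≤ t → t ≤ 1 → 0 ≤ νh + t * a ∧
      ∀ i, 0 ≤ lamh i + t * μ i ∧ lamh i + t * μ i ≤ 2 * (νh + t * a)) →
      a * ∑ i, w i ≤ ∑ i, μ i * (xt i + w i) := by
    intro a μ hf
    have hd := aux_deriv σ R (∑ i, v i * (a - μ i)) (∑ i, (a - μ i) ^ 2)
      (∑ i, μ i * xt i) hσ hR ?_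
    · have e : R * (∑ i, μ i * (xt i + w i) - a * ∑ i, w i) =
          R * ∑ i, μ i * xt i + σ * ∑ i, v i * (a - μ i) := by
        simp only [Finset.mul_sum]
        rw [← Finset.sum_sub_distrib, Finset.mul_sum, ← Finset.sum_add_distrib]
        apply Finset.sum_congr rfl; intro i _
        rw [hwv]; field_simp; ring
      have : 0 ≤ R * (∑ i, μ i * (xt i + w i) - a * ∑ i, w i) := by rw [e]; linarith
      have := nonneg_of_mul_nonneg_right this hR
      linarith
    · intro t ht0 ht1 hnn
      have e1 : e2norm (fun i => h i + (νh + t * a) - (lamh i + t * μ i)) ^ 2 =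
          H ^ 2 + 2 * t * ∑ i, v i * (a - μ i) + t ^ 2 * ∑ i, (a - μ i) ^ 2 := by
        rw [aux_e2sq, hHs, Finset.mul_sum, Finset.mul_sum, ← Finset.sum_add_distrib,
          ← Finset.sum_add_distrib]
        apply Finset.sum_congr rfl; intro i _
        simp only [hv]; ring
      have hle : e2norm (fun i => h i + (νh + t * a) - (lamh i + t * μ i)) ≤ G := by
        apply aux_sq _ hg.le
        rw [e1]; linarith
      have hz := hub ⟨νh + t * a, fun i => lamh i + t * μ i, (hf t ht0 ht1).1,
        (hf t ht0 ht1).2, hle, rfl⟩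
      rw [e1, aux_tail xt hxt] at hz
      have e2 : G ^ 2 - (H ^ 2 + 2 * t * ∑ i, v i * (a - μ i) + t ^ 2 * ∑ i, (a - μ i) ^ 2)
          = R ^ 2 - 2 * t * ∑ i, v i * (a - μ i) - t ^ 2 * ∑ i, (a - μ i) ^ 2 := by
        rw [hR2]; ring
      rw [e2] at hz
      have e3 : ∑ i, (lamh i + t * μ i) * xt i = ∑ i, lamh i * xt i + t * ∑ i, μ i * xt i := by
        rw [Finset.mul_sum, ← Finset.sum_add_distrib]
        apply Finset.sum_congr rfl; intro i _; ring
      rw [e3] at hz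
      linarith
  have c1 : νh * ∑ i, w i ≤ ∑ i, lamh i * (xt i + w i) := by
    apply foc
    intro t h0 h1
    refine ⟨by positivity, fun i => ?_⟩
    obtain ⟨a, b⟩ := hlamh i
    constructor <;> nlinarith
  have c2 : -νh * ∑ i, w i ≤ ∑ i, (-lamh i) * (xt i + w i) := by
    apply foc
    intro t h0 h1
    refine ⟨by nlinarith, fun i => ?_⟩
    obtain ⟨a, b⟩ := hlamh i
    constructor <;> nlinarith
  have c3 : νh * ∑ i, w i = ∑ i, lamh i * (xt i + w i) := by
    apply le_antisymm c1
    simp only [neg_mul, Finset.sum_neg_distrib] at c2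
    linarith
  have c4 : (1 : ℝ) * ∑ i, w i ≤ ∑ i, (if 0 ≤ xt i + w i then (0 : ℝ) else 2) * (xt i + w i) := by
    apply foc
    intro t h0 h1
    refine ⟨by positivity, fun i => ?_⟩
    obtain ⟨a, b⟩ := hlamh i
    split_ifs <;> constructor <;> nlinarith
  have feas1 : l1norm (xt + w) ≤ l1norm xt := by
    have e : l1norm (xt + w) = l1norm xt + (1 * ∑ i, w i -
        ∑ i, (if 0 ≤ xt i + w i then (0 : ℝ) else 2) * (xt i + w i)) := by
      unfold l1norm
      rw [one_mul, ← Finset.sum_sub_distrib, ← Finset.sum_add_distrib]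
      apply Finset.sum_congr rfl; intro i _
      rw [abs_of_nonneg (hx i), Pi.add_apply]
      split_ifs with hc
      · rw [abs_of_nonneg hc]; ring
      · rw [abs_of_neg (not_le.1 hc)]; ring
    linarith
  have wsq : e2norm w ^ 2 = (σ * H / R) ^ 2 := by
    rw [aux_e2sq, div_pow, mul_pow, hHs, Finset.mul_sum, Finset.sum_div]
    apply Finset.sum_congr rfl; intro i _
    rw [hwv]; ring
  have wn : e2norm w = σ * H / R :=
    (sq_eq_sq₀ (aux_e2nn _) (by positivity)).1 wsq
  have feas2 : e2norm w ≤ Cw := by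
    rw [wn, div_le_iff₀ hR]
    apply aux_sq _ (by positivity)
    rw [mul_pow, mul_pow, hR2]
    have : Cw ^ 2 * ((1 + σ ^ 2 / Cw ^ 2) * H ^ 2) ≤ Cw ^ 2 * G ^ 2 :=
      mul_le_mul_of_nonneg_left hc2 (by positivity)
    have e : Cw ^ 2 * ((1 + σ ^ 2 / Cw ^ 2) * H ^ 2) = Cw ^ 2 * H ^ 2 + σ ^ 2 * H ^ 2 := by
      field_simp
    linarith
  have val : Real.sqrt (e2norm w ^ 2 + σ ^ 2) * G + ∑ i, h i * w i
      = σ * R - ∑ i, lamh i * xt i := by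
    have s : Real.sqrt (e2norm w ^ 2 + σ ^ 2) = σ * G / R := by
      rw [wsq]
      have : (σ * H / R) ^ 2 + σ ^ 2 = (σ * G / R) ^ 2 := by
        have : G ^ 2 = R ^ 2 + H ^ 2 := by linarith
        rw [div_pow, div_pow, mul_pow, mul_pow, this]; field_simp; ring
      rw [this, Real.sqrt_sq (by positivity)]
    have e1 : ∑ i, h i * w i = ∑ i, v i * w i - νh * ∑ i, w i + ∑ i, lamh i * w i := by
      rw [Finset.mul_sum, ← Finset.sum_sub_distrib, ← Finset.sum_add_distrib]
      apply Finset.sum_congr rfl; intro i _; simp only [hv]; ring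
    have e2 : ∑ i, v i * w i = -(σ * H ^ 2 / R) := by
      rw [hHs, Finset.mul_sum, Finset.sum_div, ← Finset.sum_neg_distrib]
      apply Finset.sum_congr rfl; intro i _; rw [hwv]; ring
    have e3 : ∑ i, lamh i * (xt i + w i) = ∑ i, lamh i * xt i + ∑ i, lamh i * w i := by
      rw [← Finset.sum_add_distrib]
      apply Finset.sum_congr rfl; intro i _; ring
    have e4 : σ * G / R * G - σ * H ^ 2 / R = σ * R := by
      have : G ^ 2 = R ^ 2 + H ^ 2 := by linarith
      field_simp; linarith
    rw [s, e1, e2]; linarith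
  refine ⟨?_, ⟨feas2, feas1⟩, val, wn⟩
  apply IsLeast.csInf_eq
  refine ⟨⟨w, ⟨feas2, feas1⟩, val⟩, ?_⟩
  rintro _ ⟨u, ⟨_, hu⟩, rfl⟩
  exact aux_weak xt h lamh u νh σ G R hx hνh hlamh hσ hg.le hR.le (by rw [hR2]; ring) hu
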